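/- arXiv:2510.19961 — 2 statements merged into one kernel-verified Lean document; each statement's English description precedes it below -/
import Mathlib

section
/- Let (Q,·,e) be a loop with principal right isostrophe (Q,∘), where x∘y = x/(y^r). Then: (1) the left nucleus of (Q,·) equals the left nucleus of (Q,∘); (2) the middle nucleus of (Q,·) equals the right nucleus of (Q,∘). -/
/-- A loop `(Q, ·, e)`: a quasigroup with two-sided identity, presented with
explicit left division `ldiv a b = a \ b` and right division `rdiv b a = b / a`. -/
structure LoopStr (Q : Type*) where
  mul : Q → Q → Q
  e : Q
  ldiv : Q → Q → Q
  rdiv : Q → Q → Q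
  one_mul : ∀ x, mul e x = x
  mul_one : ∀ x, mul x e = x
  mul_ldiv : ∀ a b, mul a (ldiv a b) = b
  ldiv_mul : ∀ a b, ldiv a (mul a b) = b
  rdiv_mul : ∀ a b, mul (rdiv b a) a = b
  mul_rdiv : ∀ a b, rdiv (mul b a) a = b

namespace LoopStr

variable {Q : Type*} (S : LoopStr Q)

/-- The left inverse `x^ℓ = e / x`. -/
def linv (x : Q) : Q := S.rdiv S.e x

/-- The right inverse `x^r = x \ e`. -/
def rinv (x : Q) : Q := S.ldiv x S.e

/-- The left nucleus. -/
def lnuc : Set Q := {a | ∀ x y, S.mul (S.mul a x) y = S.mul a (S.mul x y)}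

/-- The middle nucleus. -/
def mnuc : Set Q := {a | ∀ x y, S.mul (S.mul x a) y = S.mul x (S.mul a y)}

/-- The right nucleus. -/
def rnuc : Set Q := {a | ∀ x y, S.mul (S.mul x y) a = S.mul x (S.mul y a)}

/-- The commutant `C(Q)`. -/
def commutant : Set Q := {a | ∀ x, S.mul a x = S.mul x a}

/-- The center `Z(Q) = C(Q) ∩ Nuc_ℓ ∩ Nuc_m ∩ Nuc_r`. -/
def center : Set Q := S.commutant ∩ S.lnuc ∩ S.mnuc ∩ S.rnuc

/-- The left translation `L_a` as a map. -/
def leftMul (a : Q) : Q → Q := fun x => S.mul a x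

/-- The left translation `L_a` as a permutation of `Q`. -/
def leftPerm (a : Q) : Equiv.Perm Q :=
  ⟨fun x => S.mul a x, fun x => S.ldiv a x, S.ldiv_mul a, S.mul_ldiv a⟩

/-- The right translation `R_a` as a permutation of `Q`. -/
def rightPerm (a : Q) : Equiv.Perm Q :=
  ⟨fun x => S.mul x a, fun x => S.rdiv x a, fun x => S.mul_rdiv a x, fun x => S.rdiv_mul a x⟩

/-- The multiplication group `Mlt(Q) = ⟨L_x, R_x : x ∈ Q⟩ ≤ Sym(Q)`. -/
def Mlt : Subgroup (Equiv.Perm Q) :=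
  Subgroup.closure (Set.range S.leftPerm ∪ Set.range S.rightPerm)

/-- `x^n = L_x^n(e)` for natural `n`. -/
def npow (a : Q) (n : ℕ) : Q := (S.leftPerm a ^ n) S.e

/-- `x^n = L_x^n(e)` for integer `n`. -/
def zpow (a : Q) (n : ℤ) : Q := (S.leftPerm a ^ n) S.e

/-- The order of an element: the least `n > 0` with `x^n = e` (or `0` if none exists). -/
noncomputable def lorder (a : Q) : ℕ := sInf {n : ℕ | 0 < n ∧ S.npow a n = S.e}

/-- A subloop: contains `e`, closed under multiplication and both divisions. -/
def IsSubloop (N : Set Q) : Prop :=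
  S.e ∈ N ∧ (∀ a ∈ N, ∀ b ∈ N, S.mul a b ∈ N) ∧
    (∀ a ∈ N, ∀ b ∈ N, S.ldiv a b ∈ N) ∧ (∀ a ∈ N, ∀ b ∈ N, S.rdiv a b ∈ N)

/-- A normal subloop: a subloop with `xN = Nx`, `(xN)y = x(Ny)`, `N(xy) = (Nx)y`
elementwise as sets. -/
def IsNormalSubloop (N : Set Q) : Prop :=
  S.IsSubloop N ∧
  (∀ x : Q, (fun a => S.mul x a) '' N = (fun a => S.mul a x) '' N) ∧
  (∀ x y : Q, (fun a => S.mul (S.mul x a) y) '' N = (fun a => S.mul x (S.mul a y)) '' N) ∧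
  (∀ x y : Q, (fun a => S.mul a (S.mul x y)) '' N = (fun a => S.mul (S.mul a x) y) '' N)

/-- A loop is simple if its only normal subloops are `{e}` and `Q`. -/
def IsSimple : Prop :=
  ∀ N : Set Q, S.IsNormalSubloop N → N = {S.e} ∨ N = Set.univ

lemma mul_rinv (x : Q) : S.mul x (S.rinv x) = S.e := S.mul_ldiv x S.e

lemma linv_mul (x : Q) : S.mul (S.linv x) x = S.e := S.rdiv_mul x S.e

lemma linv_rinv (x : Q) : S.linv (S.rinv x) = x := by
  have h := S.mul_rdiv (S.rinv x) x
  rw [S.mul_rinv] at h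
  exact h

lemma rinv_linv (x : Q) : S.rinv (S.linv x) = x := by
  have h := S.ldiv_mul (S.linv x) x
  rw [S.linv_mul] at h
  exact h

lemma rinv_e : S.rinv S.e = S.e := by
  have h := S.ldiv_mul S.e S.e
  rw [S.one_mul] at h
  exact h

lemma rdiv_e (x : Q) : S.rdiv x S.e = x := by
  have h := S.mul_rdiv S.e x
  rw [S.mul_one] at h
  exact h

/-- The principal right isostrophe `(Q, ∘)` of `(Q, ·)`, with `x ∘ y = x / (y^r)`,
right division `x // y = x·(y^r)` and left division `x \\ y = (y \ x)^ℓ`. -/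
def iso : LoopStr Q where
  mul x y := S.rdiv x (S.rinv y)
  e := S.e
  ldiv x y := S.linv (S.ldiv y x)
  rdiv x y := S.mul x (S.rinv y)
  one_mul x := S.linv_rinv x
  mul_one x := by
    show S.rdiv x (S.rinv S.e) = x
    rw [S.rinv_e, S.rdiv_e]
  mul_ldiv a b := by
    show S.rdiv a (S.rinv (S.linv (S.ldiv b a))) = b
    rw [S.rinv_linv]
    have h := S.mul_rdiv (S.ldiv b a) b
    rw [S.mul_ldiv] at h
    exact h
  ldiv_mul a b := by
    show S.linv (S.ldiv (S.rdiv a (S.rinv b)) a) = b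
    have h := S.ldiv_mul (S.rdiv a (S.rinv b)) (S.rinv b)
    rw [S.rdiv_mul] at h
    rw [h, S.linv_rinv]
  rdiv_mul a b := by
    show S.rdiv (S.mul b (S.rinv a)) (S.rinv a) = b
    exact S.mul_rdiv (S.rinv a) b
  mul_rdiv a b := by
    show S.mul (S.rdiv b (S.rinv a)) (S.rinv a) = b
    exact S.rdiv_mul (S.rinv a) b

end LoopStr

/-!
The right translations of the isostrophe `(Q, ∘)` are the inverses of the right translations of
`(Q, ·)`. Write `T` for the set of right translations of a loop; it contains `1`, and each of its
members is determined by its value at `e`. The nuclei are recovered from `T` by evaluating at `e`: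
the left nucleus from the permutations `p` commuting with `T`, the right nucleus from those with
`p T = T`, and the middle nucleus from those with `T p = T`. Replacing `T` by `T⁻¹` does not affect
the first condition and interchanges the other two.
-/

open scoped Pointwise RightActions

lemma smul_set_inv_eq_inv_iff {G : Type*} [Group G] {g : G} {T : Set G} :
    g • T⁻¹ = T⁻¹ ↔ T <• g = T := by
  rw [← inv_inj, Set.inv_smul_set_distrib, inv_inv, MulOpposite.op_inv, inv_smul_eq_iff, eq_comm]

lemma centralizer_inv {G : Type*} [Group G] (T : Set G) :
    Subgroup.centralizer T⁻¹ = Subgroup.centralizer T := by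
  rw [← Subgroup.centralizer_closure, Subgroup.closure_inv, Subgroup.centralizer_closure]

namespace LoopStr

variable {Q : Type*} (S : LoopStr Q)

/-- The set `{R_y : y ∈ Q}` of right translations, inside the group of permutations of `Q`. -/
def rightTranslations : Set (Equiv.Perm Q) := Set.range S.rightPerm

lemma rightPerm_apply (a x : Q) : S.rightPerm a x = S.mul x a := rfl

lemma rightPerm_apply_e (a : Q) : S.rightPerm a S.e = a := S.one_mul a

lemma rightPerm_mem_rightTranslations (a : Q) : S.rightPerm a ∈ S.rightTranslations :=
  Set.mem_range_self a

lemma one_mem_rightTranslations : 1 ∈ S.rightTranslations :=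
  ⟨S.e, Equiv.ext S.mul_one⟩

variable {S} {a : Q} {p : Equiv.Perm Q}

lemma rightPerm_eq_of_mem_rightTranslations (hp : p ∈ S.rightTranslations) :
    S.rightPerm (p S.e) = p := by
  obtain ⟨a, rfl⟩ := hp
  rw [rightPerm_apply_e]

lemma mem_lnuc_iff_leftPerm_mem_centralizer :
    a ∈ S.lnuc ↔ S.leftPerm a ∈ Subgroup.centralizer S.rightTranslations := by
  simp only [Subgroup.mem_centralizer_iff, rightTranslations, Set.forall_mem_range, Equiv.ext_iff]
  exact forall_comm

lemma mem_rnuc_iff_rightPerm_mul :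
    a ∈ S.rnuc ↔ ∀ y, S.rightPerm a * S.rightPerm y = S.rightPerm (S.mul y a) := by
  simp only [Equiv.ext_iff]
  exact forall_comm

lemma mem_mnuc_iff_rightPerm_mul :
    a ∈ S.mnuc ↔ ∀ y, S.rightPerm y * S.rightPerm a = S.rightPerm (S.mul a y) := by
  simp only [Equiv.ext_iff]
  exact forall_comm

lemma eq_leftPerm_of_mem_centralizer (hp : p ∈ Subgroup.centralizer S.rightTranslations) :
    p = S.leftPerm (p S.e) := by
  ext x
  have hcomm : S.rightPerm x * p = p * S.rightPerm x :=
    Subgroup.mem_centralizer_iff.1 hp _ (S.rightPerm_mem_rightTranslations x)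
  calc p x = (p * S.rightPerm x) S.e := by rw [Equiv.Perm.mul_apply, rightPerm_apply_e]
    _ = S.rightPerm x (p S.e) := by rw [← hcomm, Equiv.Perm.mul_apply]

lemma mem_lnuc_iff_exists_mem_centralizer :
    a ∈ S.lnuc ↔ ∃ p ∈ Subgroup.centralizer S.rightTranslations, p S.e = a := by
  rw [mem_lnuc_iff_leftPerm_mem_centralizer]
  constructor
  · exact fun ha => ⟨S.leftPerm a, ha, S.mul_one a⟩
  · rintro ⟨p, hp, rfl⟩
    rwa [← eq_leftPerm_of_mem_centralizer hp]

lemma mem_rnuc_iff_exists_smul_eq :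
    a ∈ S.rnuc ↔
      ∃ p : Equiv.Perm Q, p • S.rightTranslations = S.rightTranslations ∧ p S.e = a := by
  rw [mem_rnuc_iff_rightPerm_mul]
  constructor
  · intro ha
    refine ⟨S.rightPerm a, ?_, S.rightPerm_apply_e a⟩
    calc S.rightPerm a • S.rightTranslations
        = Set.range fun y => S.rightPerm a * S.rightPerm y := Set.smul_set_range _ _
      _ = Set.range (S.rightPerm ∘ S.rightPerm a) := congrArg Set.range (funext ha)
      _ = S.rightTranslations := (S.rightPerm a).surjective.range_comp S.rightPerm
  · rintro ⟨p, hp, rfl⟩ y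
    have mul_mem : ∀ q ∈ S.rightTranslations, p * q ∈ S.rightTranslations :=
      fun q hq => hp ▸ Set.smul_mem_smul_set hq
    have p_mem : p ∈ S.rightTranslations := by
      simpa only [_root_.mul_one] using mul_mem 1 S.one_mem_rightTranslations
    have hpy : S.rightPerm ((p * S.rightPerm y) S.e) = p * S.rightPerm y :=
      rightPerm_eq_of_mem_rightTranslations (mul_mem _ (S.rightPerm_mem_rightTranslations y))
    rw [← rightPerm_apply, rightPerm_eq_of_mem_rightTranslations p_mem, ← hpy,
      Equiv.Perm.mul_apply, rightPerm_apply_e]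

lemma mem_mnuc_iff_exists_op_smul_eq :
    a ∈ S.mnuc ↔
      ∃ p : Equiv.Perm Q, S.rightTranslations <• p = S.rightTranslations ∧ p S.e = a := by
  rw [mem_mnuc_iff_rightPerm_mul]
  constructor
  · intro ha
    refine ⟨S.rightPerm a, ?_, S.rightPerm_apply_e a⟩
    calc S.rightTranslations <• S.rightPerm a
        = Set.range fun y => S.rightPerm y * S.rightPerm a := Set.smul_set_range _ _
      _ = Set.range (S.rightPerm ∘ S.leftPerm a) := congrArg Set.range (funext ha)
      _ = S.rightTranslations := (S.leftPerm a).surjective.range_comp S.rightPerm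
  · rintro ⟨p, hp, rfl⟩ y
    have mul_mem : ∀ q ∈ S.rightTranslations, q * p ∈ S.rightTranslations :=
      fun q hq => hp ▸ Set.smul_mem_smul_set hq
    have p_mem : p ∈ S.rightTranslations := by
      simpa only [_root_.one_mul] using mul_mem 1 S.one_mem_rightTranslations
    have hyp : S.rightPerm ((S.rightPerm y * p) S.e) = S.rightPerm y * p :=
      rightPerm_eq_of_mem_rightTranslations (mul_mem _ (S.rightPerm_mem_rightTranslations y))
    rw [rightPerm_eq_of_mem_rightTranslations p_mem, ← hyp,
      Equiv.Perm.mul_apply, rightPerm_apply]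

variable (S)

lemma iso_e : S.iso.e = S.e := rfl

lemma rightPerm_iso (y : Q) : S.iso.rightPerm y = (S.rightPerm (S.rinv y))⁻¹ := rfl

lemma rinv_surjective : Function.Surjective S.rinv := fun x => ⟨S.linv x, S.rinv_linv x⟩

lemma rightTranslations_iso : S.iso.rightTranslations = S.rightTranslations⁻¹ :=
  calc S.iso.rightTranslations
      = Set.range fun y => (S.rightPerm (S.rinv y))⁻¹ :=
        congrArg Set.range (funext S.rightPerm_iso)
    _ = Set.range fun y => (S.rightPerm y)⁻¹ :=
        S.rinv_surjective.range_comp fun y => (S.rightPerm y)⁻¹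
    _ = S.rightTranslations⁻¹ := Set.inv_range.symm

end LoopStr

/-- The left nucleus of `(Q,·)` equals the left nucleus of its principal
right isostrophe `(Q,∘)`, and the middle nucleus of `(Q,·)` equals the right nucleus
of `(Q,∘)`. -/
theorem iso_nuclei {Q : Type*} (S : LoopStr Q) :
    S.iso.lnuc = S.lnuc ∧ S.iso.rnuc = S.mnuc := by
  constructor
  · ext a
    simp only [LoopStr.mem_lnuc_iff_exists_mem_centralizer, S.rightTranslations_iso, S.iso_e,
      centralizer_inv]
  · ext a
    simp only [LoopStr.mem_rnuc_iff_exists_smul_eq, LoopStr.mem_mnuc_iff_exists_op_smul_eq,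
      S.rightTranslations_iso, S.iso_e, smul_set_inv_eq_inv_iff]
end

section
/- Let (Q,·,e) be a loop with left and middle nuclear squares, let a ∈ Nuc_ℓ(Q) ∩ Nuc_m(Q) and x ∈ Q. Then L_x ∘ L_a ∘ L_x^{-1} = L_{(x·a)·x^r}, and (x·a)·x^r = x·(a·x^r) lies in Nuc_ℓ(Q) ∩ Nuc_m(Q). -/
/-!
Write `N = Nuc_ℓ ∩ Nuc_m`. If `a`, `x²` and `(a·x)²` lie in `N`, then so does
`(x·a)·x = a^r·(a·x)²`, and the identity `(x·a)·x^r = ((x·a)·x)·(x²)^r` exhibits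
`g = (x·a)·x^r` as a product of elements of `N`. Since `g` is left nuclear, `g·x = x·a`, so
`L_x ∘ L_a = L_{x·a} = L_{g·x} = L_g ∘ L_x`.
-/

namespace LoopStr

section Cancellation

variable {Q : Type*} (S : LoopStr Q)

lemma mul_left_cancel {a b c : Q} (h : S.mul a b = S.mul a c) : b = c := by
  rw [← S.ldiv_mul a b, h, S.ldiv_mul]

lemma mul_right_cancel {a b c : Q} (h : S.mul a c = S.mul b c) : a = b := by
  rw [← S.mul_rdiv c a, h, S.mul_rdiv]

lemma leftMul_comp_ldiv (x : Q) : S.leftMul x ∘ S.ldiv x = id :=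
  funext (S.mul_ldiv x)

end Cancellation

variable {Q : Type*} {S : LoopStr Q} {a b x y : Q}

lemma leftMul_mul_of_mem_lnuc (ha : a ∈ S.lnuc) (x : Q) :
    S.leftMul (S.mul a x) = S.leftMul a ∘ S.leftMul x :=
  funext (ha x)

lemma leftMul_mul_of_mem_mnuc (ha : a ∈ S.mnuc) (x : Q) :
    S.leftMul (S.mul x a) = S.leftMul x ∘ S.leftMul a :=
  funext (ha x)

lemma mul_rinv_cancel_left_of_mem_lnuc (ha : a ∈ S.lnuc) (x : Q) :
    S.mul a (S.mul (S.rinv a) x) = x := by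
  rw [← ha, S.mul_rinv, S.one_mul]

lemma rinv_mul_cancel_left_of_mem_lnuc (ha : a ∈ S.lnuc) (x : Q) :
    S.mul (S.rinv a) (S.mul a x) = x :=
  S.mul_left_cancel (mul_rinv_cancel_left_of_mem_lnuc ha _)

lemma rinv_mul_self_of_mem_lnuc (ha : a ∈ S.lnuc) : S.mul (S.rinv a) a = S.e := by
  simpa only [S.mul_one] using rinv_mul_cancel_left_of_mem_lnuc ha S.e

lemma linv_eq_rinv_of_mem_mnuc (ha : a ∈ S.mnuc) : S.linv a = S.rinv a :=
  calc
    S.linv a = S.mul (S.linv a) (S.mul a (S.rinv a)) := by rw [S.mul_rinv, S.mul_one]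
    _ = S.mul (S.mul (S.linv a) a) (S.rinv a) := (ha _ _).symm
    _ = S.rinv a := by rw [S.linv_mul, S.one_mul]

lemma rinv_mul_cancel_left_of_mem_mnuc (ha : a ∈ S.mnuc) (x : Q) :
    S.mul (S.rinv a) (S.mul a x) = x := by
  rw [← linv_eq_rinv_of_mem_mnuc ha, ← ha, S.linv_mul, S.one_mul]

lemma mul_rinv_cancel_left_of_mem_mnuc (ha : a ∈ S.mnuc) (x : Q) :
    S.mul a (S.mul (S.rinv a) x) = x :=
  S.mul_left_cancel (rinv_mul_cancel_left_of_mem_mnuc ha _)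

lemma mul_mem_lnuc (ha : a ∈ S.lnuc) (hb : b ∈ S.lnuc) : S.mul a b ∈ S.lnuc := fun x y ↦ by
  rw [ha b x, ha, hb, ha]

lemma mul_mem_mnuc (ha : a ∈ S.mnuc) (hb : b ∈ S.mnuc) : S.mul a b ∈ S.mnuc := fun x y ↦ by
  rw [← ha x b, hb, ha, hb]

lemma rinv_mem_lnuc (ha : a ∈ S.lnuc) : S.rinv a ∈ S.lnuc := fun x y ↦
  S.mul_left_cancel (a := a) <| by
    rw [← ha, mul_rinv_cancel_left_of_mem_lnuc ha, mul_rinv_cancel_left_of_mem_lnuc ha]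

lemma rinv_mem_mnuc (ha : a ∈ S.mnuc) : S.rinv a ∈ S.mnuc := fun x y ↦ by
  obtain ⟨z, rfl⟩ : ∃ z, S.mul z a = x := ⟨S.rdiv x a, S.rdiv_mul a x⟩
  rw [ha, S.mul_rinv, S.mul_one, ha, mul_rinv_cancel_left_of_mem_mnuc ha]

lemma mul_mem_lnuc_inter_mnuc (ha : a ∈ S.lnuc ∩ S.mnuc) (hb : b ∈ S.lnuc ∩ S.mnuc) :
    S.mul a b ∈ S.lnuc ∩ S.mnuc :=
  ⟨mul_mem_lnuc ha.1 hb.1, mul_mem_mnuc ha.2 hb.2⟩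

lemma rinv_mem_lnuc_inter_mnuc (ha : a ∈ S.lnuc ∩ S.mnuc) : S.rinv a ∈ S.lnuc ∩ S.mnuc :=
  ⟨rinv_mem_lnuc ha.1, rinv_mem_mnuc ha.2⟩

lemma mul_mul_eq_rinv_mul_sq (ha : a ∈ S.lnuc ∩ S.mnuc) (x : Q) :
    S.mul (S.mul x a) x = S.mul (S.rinv a) (S.mul (S.mul a x) (S.mul a x)) := by
  rw [ha.1 x, rinv_mul_cancel_left_of_mem_lnuc ha.1, ha.2 x]

lemma mul_rinv_eq_mul_mul_rinv_sq (hx : S.mul x x ∈ S.lnuc) (hyx : S.mul y x ∈ S.lnuc) :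
    S.mul y (S.rinv x) = S.mul (S.mul y x) (S.rinv (S.mul x x)) := by
  set g := S.mul (S.mul y x) (S.rinv (S.mul x x))
  have hg : g ∈ S.lnuc := mul_mem_lnuc hyx (rinv_mem_lnuc hx)
  have hgx : S.mul g x = y := S.mul_right_cancel <|
    calc
      S.mul (S.mul g x) x = S.mul g (S.mul x x) := hg x x
      _ = S.mul (S.mul y x) (S.mul (S.rinv (S.mul x x)) (S.mul x x)) := hyx _ _
      _ = S.mul y x := by rw [rinv_mul_self_of_mem_lnuc hx, S.mul_one]
  rw [← hgx, hg, S.mul_rinv, S.mul_one]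

lemma mul_mul_rinv_mem_lnuc_inter_mnuc (ha : a ∈ S.lnuc ∩ S.mnuc)
    (hx : S.mul x x ∈ S.lnuc ∩ S.mnuc)
    (hax : S.mul (S.mul a x) (S.mul a x) ∈ S.lnuc ∩ S.mnuc) :
    S.mul (S.mul x a) (S.rinv x) ∈ S.lnuc ∩ S.mnuc := by
  have hxax : S.mul (S.mul x a) x ∈ S.lnuc ∩ S.mnuc := by
    rw [mul_mul_eq_rinv_mul_sq ha]
    exact mul_mem_lnuc_inter_mnuc (rinv_mem_lnuc_inter_mnuc ha) hax
  rw [mul_rinv_eq_mul_mul_rinv_sq hx.1 hxax.1]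
  exact mul_mem_lnuc_inter_mnuc hxax (rinv_mem_lnuc_inter_mnuc hx)

lemma mul_rinv_mul_cancel_of_mem_lnuc (h : S.mul y (S.rinv x) ∈ S.lnuc) :
    S.mul (S.mul y (S.rinv x)) x = y :=
  S.mul_right_cancel (c := S.rinv x) <| by rw [h, S.mul_rinv, S.mul_one]

lemma leftMul_comp_leftMul_comp_ldiv (ha : a ∈ S.mnuc)
    (h : S.mul (S.mul x a) (S.rinv x) ∈ S.lnuc) :
    S.leftMul x ∘ S.leftMul a ∘ S.ldiv x = S.leftMul (S.mul (S.mul x a) (S.rinv x)) := by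
  have hcomp : S.leftMul x ∘ S.leftMul a =
      S.leftMul (S.mul (S.mul x a) (S.rinv x)) ∘ S.leftMul x := by
    rw [← leftMul_mul_of_mem_mnuc ha, ← leftMul_mul_of_mem_lnuc h,
      mul_rinv_mul_cancel_of_mem_lnuc h]
  rw [← Function.comp_assoc, hcomp, Function.comp_assoc, S.leftMul_comp_ldiv, Function.comp_id]

end LoopStr

theorem conj_leftMul_general {Q : Type*} (S : LoopStr Q) {a x : Q} (ha : a ∈ S.lnuc ∩ S.mnuc)
    (hx : S.mul x x ∈ S.lnuc ∩ S.mnuc)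
    (hax : S.mul (S.mul a x) (S.mul a x) ∈ S.lnuc ∩ S.mnuc) :
    S.leftMul x ∘ S.leftMul a ∘ S.ldiv x = S.leftMul (S.mul (S.mul x a) (S.rinv x)) ∧
    S.mul (S.mul x a) (S.rinv x) = S.mul x (S.mul a (S.rinv x)) ∧
    S.mul (S.mul x a) (S.rinv x) ∈ S.lnuc ∩ S.mnuc := by
  have hmem := LoopStr.mul_mul_rinv_mem_lnuc_inter_mnuc ha hx hax
  exact ⟨LoopStr.leftMul_comp_leftMul_comp_ldiv ha.2 hmem.1, ha.2 x (S.rinv x), hmem⟩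

/-- In a loop with left and middle nuclear squares, for
`a ∈ Nuc_ℓ(Q) ∩ Nuc_m(Q)` and `x ∈ Q`, `L_x ∘ L_a ∘ L_x⁻¹ = L_{(x·a)·x^r}`, and
`(x·a)·x^r = x·(a·x^r)` lies in `Nuc_ℓ(Q) ∩ Nuc_m(Q)`.
(Here `L_x⁻¹` is the map `y ↦ x \ y`.) -/
theorem conj_leftMul {Q : Type*} (S : LoopStr Q)
    (h : ∀ x : Q, S.mul x x ∈ S.lnuc ∩ S.mnuc)
    (a : Q) (ha : a ∈ S.lnuc ∩ S.mnuc) (x : Q) :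
    S.leftMul x ∘ S.leftMul a ∘ S.ldiv x = S.leftMul (S.mul (S.mul x a) (S.rinv x)) ∧
    S.mul (S.mul x a) (S.rinv x) = S.mul x (S.mul a (S.rinv x)) ∧
    S.mul (S.mul x a) (S.rinv x) ∈ S.lnuc ∩ S.mnuc :=
  conj_leftMul_general S ha (h x) (h (S.mul a x))
end
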